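/- Let G be a word hyperbolic group generated by a finite set 𝒢 closed under inversion, and let C₁ be a virtually cyclic subgroup of G with a finite generating set 𝒞₁ ⊆ 𝒢 closed under inversion. Then there is a constant λ > 0 such that whenever U is a d_𝒢-geodesic word whose value Ū is of minimal l_𝒢-length in the coset Ū·C₁, and V is a d_{𝒞₁}-geodesic word over 𝒞₁, the concatenation UV is λ-quasigeodesic with respect to d_𝒢. -/

import Mathlib

universe u v w

section Defs

variable {G : Type u} [Group G]

/-- A finite generating set closed under inversion. -/
def IsSymmGen (X : Set G) : Prop :=
  X.Finite ∧ (∀ x ∈ X, x⁻¹ ∈ X) ∧ Subgroup.closure X = ⊤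

/-- Word length of `g` with respect to `X`. -/
noncomputable def wordLength (X : Set G) (g : G) : ℕ :=
  sInf {n : ℕ | ∃ l : List G, l.length = n ∧ (∀ x ∈ l, x ∈ X) ∧ l.prod = g}

/-- Word metric. -/
noncomputable def wordDist (X : Set G) (g h : G) : ℕ :=
  wordLength X (g⁻¹ * h)

/-- Gromov product with respect to the word metric. -/
noncomputable def gromovProd (X : Set G) (x y w : G) : ℝ :=
  ((wordDist X x w : ℝ) + (wordDist X y w : ℝ) - (wordDist X x y : ℝ)) / 2

end Defs

/-- A group is word hyperbolic if for some finite symmetric generating set the Gromov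
product satisfies the hyperbolicity inequality. -/
def IsWordHyperbolic (G : Type u) [Group G] : Prop :=
  ∃ X : Set G, IsSymmGen X ∧ ∃ δ : ℝ, 0 ≤ δ ∧
    ∀ x y z w : G,
      gromovProd X x z w ≥ min (gromovProd X x y w) (gromovProd X y z w) - δ

/-- A subgroup is quasiconvex: it is finitely generated and word lengths distort linearly. -/
def IsQuasiconvex {G : Type u} [Group G] (A : Subgroup G) : Prop :=
  ∃ Y : Set ↥A, IsSymmGen Y ∧ ∃ X : Set G, IsSymmGen X ∧ ∃ c : ℝ, 0 < c ∧
    ∀ a : ↥A, (wordLength Y a : ℝ) ≤ c * (wordLength X (a : G) : ℝ) + c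

/-- Property (Q): every finitely generated subgroup is quasiconvex. -/
def HasPropertyQ (G : Type u) [Group G] : Prop :=
  ∀ H : Subgroup G, H.FG → IsQuasiconvex H

/-- A group is virtually cyclic if it has a cyclic subgroup of finite index. -/
def IsVirtuallyCyclic (C : Type u) [Group C] : Prop :=
  ∃ Z : Subgroup C, IsCyclic ↥Z ∧ Z.FiniteIndex

/-- `G` is the amalgamated free product of its subgroups `A` and `B` along `C`:
`C = A ⊓ B`, `A ⊔ B = ⊤` and `G` has the pushout universal property. -/
structure IsAmalgamatedFreeProduct {G : Type u} [Group G] (A B C : Subgroup G) : Prop where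
  le_left : C ≤ A
  le_right : C ≤ B
  inf_eq : A ⊓ B = C
  sup_eq_top : A ⊔ B = ⊤
  univ : ∀ (K : Type u) [Group K] (f : ↥A →* K) (g : ↥B →* K),
    (∀ (c : G) (hA : c ∈ A) (hB : c ∈ B), f ⟨c, hA⟩ = g ⟨c, hB⟩) →
    ∃ h : G →* K, (∀ a : ↥A, h a = f a) ∧ (∀ b : ↥B, h b = g b)

section Words

variable {G : Type u} [Group G]

/-- A word over the alphabet `X`. -/
def IsWordOver (X : Set G) (l : List G) : Prop := ∀ x ∈ l, x ∈ X

/-- A geodesic word over `X`. -/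
def IsGeodesicWord (X : Set G) (l : List G) : Prop :=
  IsWordOver X l ∧ l.length = wordLength X l.prod

/-- A `lam`-quasigeodesic word over `X`: every subword `v` satisfies
`l(v) ≤ lam * l_X(v̄) + lam`. -/
def IsQuasigeodesicWord (X : Set G) (lam : ℝ) (l : List G) : Prop :=
  IsWordOver X l ∧
    ∀ v : List G, v <:+: l → (v.length : ℝ) ≤ lam * (wordLength X v.prod : ℝ) + lam

/-- `g` is a shortest element of the subset `S` with respect to `wordLength X`. -/
def ShortestIn (X : Set G) (g : G) (S : Set G) : Prop :=
  g ∈ S ∧ ∀ s ∈ S, wordLength X g ≤ wordLength X s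

end Words

/-- `G` together with `ια, ιβ` is the pushout of `ℤ → A, 1 ↦ x` and `ℤ → B, 1 ↦ y`. -/
structure IsAmalgamOverZ {A : Type u} {B : Type v} {G : Type w}
    [Group A] [Group B] [Group G]
    (ια : A →* G) (ιβ : B →* G) (x : A) (y : B) : Prop where
  comm : ια x = ιβ y
  gen : ια.range ⊔ ιβ.range = ⊤
  univ : ∀ (K : Type (max u v w)) [Group K] (f : A →* K) (g : B →* K),
    f x = g y → ∃ h : G →* K, h.comp ια = f ∧ h.comp ιβ = g

/-!
Let `g` be an element of infinite order. Its powers leave every ball, so some `g ^ N` is very long;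
let `m` lie in the middle of a geodesic from `1` to `g ^ N`. A bounded power `g ^ i` moves both
endpoints by a bounded amount, so near `m` it is almost a translation along the geodesic. Since
balls are finite, `i` can be chosen so that `g ^ i` moves `m` by much more than `δ`; then applying
`g ^ i` twice moves `m` almost twice as far, and hyperbolicity propagates this to linear growth of
the powers of `g ^ i`. Hence virtually cyclic subgroups are undistorted.

A subword of `UV` that meets both factors has value `ab`, where `a` is the value of a suffix of `U`
and `b ∈ C₁`. Minimality of `Ū` in its coset gives `l(a) ≤ l(ab)`, hence `l(b) ≤ 2 l(ab)`, and
undistortedness of `C₁` bounds the length of the part of the subword in `V`.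
-/

section WordLength

variable {G : Type u} [Group G] {X : Set G}

theorem wordLength_prod_le {l : List G} (hl : IsWordOver X l) :
    wordLength X l.prod ≤ l.length :=
  Nat.sInf_le ⟨l, rfl, hl, rfl⟩

theorem wordLength_one : wordLength X (1 : G) = 0 :=
  Nat.le_zero.mp (wordLength_prod_le (l := []) (List.forall_mem_nil _))

theorem exists_isGeodesicWord_prod_eq (hinv : ∀ x ∈ X, x⁻¹ ∈ X) {g : G}
    (hg : g ∈ Subgroup.closure X) : ∃ l : List G, IsGeodesicWord X l ∧ l.prod = g := by
  rw [← Subgroup.mem_toSubmonoid, Subgroup.closure_toSubmonoid] at hg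
  obtain ⟨w, hw, hwg⟩ := Submonoid.exists_list_of_mem_closure hg
  have hwX : IsWordOver X w := fun x hx => (hw x hx).elim id fun h => inv_inv x ▸ hinv _ h
  obtain ⟨l, hlen, hl, rfl⟩ := Nat.sInf_mem
    (s := {n | ∃ l : List G, l.length = n ∧ (∀ x ∈ l, x ∈ X) ∧ l.prod = g})
    ⟨w.length, w, rfl, hwX, hwg⟩
  exact ⟨l, ⟨hl, hlen⟩, rfl⟩

theorem wordLength_mul_le (hinv : ∀ x ∈ X, x⁻¹ ∈ X) {g h : G}
    (hg : g ∈ Subgroup.closure X) (hh : h ∈ Subgroup.closure X) :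
    wordLength X (g * h) ≤ wordLength X g + wordLength X h := by
  obtain ⟨u, hu, rfl⟩ := exists_isGeodesicWord_prod_eq hinv hg
  obtain ⟨v, hv, rfl⟩ := exists_isGeodesicWord_prod_eq hinv hh
  rw [← hu.2, ← hv.2, ← List.prod_append, ← List.length_append]
  exact wordLength_prod_le (List.forall_mem_append.mpr ⟨hu.1, hv.1⟩)

theorem wordLength_inv (hinv : ∀ x ∈ X, x⁻¹ ∈ X) (g : G) :
    wordLength X g⁻¹ = wordLength X g := by
  have inverse_word : ∀ (h : G) (n : ℕ),
      (∃ l : List G, l.length = n ∧ (∀ x ∈ l, x ∈ X) ∧ l.prod = h) →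
        ∃ l : List G, l.length = n ∧ (∀ x ∈ l, x ∈ X) ∧ l.prod = h⁻¹ := by
    rintro _ _ ⟨l, rfl, hl, rfl⟩
    refine ⟨(l.map (·⁻¹)).reverse, by simp, fun x hx => ?_, (List.prod_inv_reverse l).symm⟩
    obtain ⟨y, hy, rfl⟩ := List.mem_map.mp (List.mem_reverse.mp hx)
    exact hinv y (hl y hy)
  refine congrArg sInf (Set.ext fun n => ⟨fun h => ?_, inverse_word g n⟩)
  have := inverse_word g⁻¹ n h
  rwa [inv_inv] at this

theorem wordLength_pow_le (hinv : ∀ x ∈ X, x⁻¹ ∈ X) {g : G}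
    (hg : g ∈ Subgroup.closure X) (n : ℕ) : wordLength X (g ^ n) ≤ n * wordLength X g := by
  induction n with
  | zero => simp [wordLength_one]
  | succ n ih =>
    calc wordLength X (g ^ (n + 1))
        ≤ wordLength X (g ^ n) + wordLength X g :=
          pow_succ g n ▸ wordLength_mul_le hinv (pow_mem hg n) hg
      _ ≤ n * wordLength X g + wordLength X g := by gcongr
      _ = (n + 1) * wordLength X g := by ring

theorem wordLength_pow_natAbs (hinv : ∀ x ∈ X, x⁻¹ ∈ X) (g : G) (n : ℤ) :
    wordLength X (g ^ n.natAbs) = wordLength X (g ^ n) := by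
  obtain ⟨k, rfl | rfl⟩ := n.eq_nat_or_neg
  · simp
  · simp [wordLength_inv hinv]

theorem IsGeodesicWord.infix (hinv : ∀ x ∈ X, x⁻¹ ∈ X) {l v : List G}
    (hl : IsGeodesicWord X l) (hv : v <:+: l) : IsGeodesicWord X v := by
  obtain ⟨a, b, rfl⟩ := hv
  obtain ⟨hX, hlen⟩ := hl
  obtain ⟨hav, hb⟩ := List.forall_mem_append.mp hX
  obtain ⟨ha, hv⟩ := List.forall_mem_append.mp hav
  have prod_mem {w : List G} (hw : IsWordOver X w) : w.prod ∈ Subgroup.closure X :=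
    list_prod_mem fun x hx => Subgroup.subset_closure (hw x hx)
  refine ⟨hv, le_antisymm ?_ (wordLength_prod_le hv)⟩
  simp only [List.prod_append, List.length_append] at hlen
  have h_av_b := wordLength_mul_le hinv (mul_mem (prod_mem ha) (prod_mem hv)) (prod_mem hb)
  have h_a_v := wordLength_mul_le hinv (prod_mem ha) (prod_mem hv)
  have h_a := wordLength_prod_le ha
  have h_b := wordLength_prod_le hb
  omega

end WordLength

namespace IsSymmGen

variable {G : Type u} [Group G] {X : Set G}

theorem mem_closure (hX : IsSymmGen X) (g : G) : g ∈ Subgroup.closure X :=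
  hX.2.2 ▸ Subgroup.mem_top g

theorem wordLength_mul_le (hX : IsSymmGen X) (g h : G) :
    wordLength X (g * h) ≤ wordLength X g + wordLength X h :=
  _root_.wordLength_mul_le hX.2.1 (hX.mem_closure g) (hX.mem_closure h)

theorem finite_wordLength_le (hX : IsSymmGen X) (n : ℕ) : {g : G | wordLength X g ≤ n}.Finite := by
  have : Finite X := hX.1
  refine ((List.finite_length_le X n).image fun l => (l.map Subtype.val).prod).subset ?_
  intro g hg
  obtain ⟨l, ⟨hlX, hlen⟩, rfl⟩ := exists_isGeodesicWord_prod_eq hX.2.1 (hX.mem_closure g)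
  lift l to List X using hlX
  rw [List.length_map] at hlen
  exact ⟨l, hlen.le.trans hg, rfl⟩

theorem wordDist_comm (hX : IsSymmGen X) (g h : G) : wordDist X g h = wordDist X h g := by
  simpa [wordDist] using (wordLength_inv hX.2.1 (g⁻¹ * h)).symm

theorem wordDist_triangle (hX : IsSymmGen X) (g h k : G) :
    wordDist X g k ≤ wordDist X g h + wordDist X h k := by
  simpa [wordDist, mul_assoc] using hX.wordLength_mul_le (g⁻¹ * h) (h⁻¹ * k)

theorem wordDist_mul_self_le (hX : IsSymmGen X) (g t : G) :
    wordDist X t (g * t) ≤ wordLength X g + 2 * wordLength X t := by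
  have h_inv := hX.wordLength_mul_le t⁻¹ (g * t)
  have h_mul := hX.wordLength_mul_le g t
  rw [wordLength_inv hX.2.1] at h_inv
  rw [wordDist]
  omega

theorem exists_wordDist_eq (hX : IsSymmGen X) {g h : G} {k : ℕ} (hk : k ≤ wordDist X g h) :
    ∃ m : G, wordDist X g m = k ∧ k + wordDist X m h = wordDist X g h := by
  obtain ⟨l, hl, hprod⟩ := exists_isGeodesicWord_prod_eq hX.2.1 (hX.mem_closure (g⁻¹ * h))
  have hlen : l.length = wordDist X g h := by rw [hl.2, hprod, wordDist]
  have htake := (hl.infix hX.2.1 (List.take_prefix k l).isInfix).2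
  have hdrop := (hl.infix hX.2.1 (List.drop_suffix k l).isInfix).2
  have hright : (g * (l.take k).prod)⁻¹ * h = (l.drop k).prod := by
    rw [mul_inv_rev, mul_assoc, ← hprod, ← List.prod_take_mul_prod_drop l k, inv_mul_cancel_left]
  rw [List.length_take] at htake
  rw [List.length_drop] at hdrop
  refine ⟨g * (l.take k).prod, ?_, ?_⟩
  · rw [wordDist, inv_mul_cancel_left]
    omega
  · rw [wordDist, hright]
    omega

/-- The word metric of a symmetric generating set. The generating set is not determined by the
group, so this is not an instance. -/
noncomputable abbrev pseudoMetricSpace (hX : IsSymmGen X) : PseudoMetricSpace G where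
  dist g h := wordDist X g h
  dist_self g := by simp [wordDist, wordLength_one]
  dist_comm g h := congrArg Nat.cast (hX.wordDist_comm g h)
  dist_triangle g h k := mod_cast hX.wordDist_triangle g h k

theorem isometry_mul_left (hX : IsSymmGen X) (g : G) :
    @Isometry G G hX.pseudoMetricSpace.toPseudoEMetricSpace
      hX.pseudoMetricSpace.toPseudoEMetricSpace (g * ·) := by
  let := hX.pseudoMetricSpace
  refine Isometry.of_dist_eq fun x y => congrArg Nat.cast ?_
  simp [wordDist, mul_assoc]

end IsSymmGen

/-- Gromov's `δ`-hyperbolicity of a metric space, in its four-point form. -/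
def IsGromovHyperbolic (α : Type*) [PseudoMetricSpace α] (δ : ℝ) : Prop :=
  ∀ x y z w : α, dist x y + dist z w ≤ max (dist x z + dist y w) (dist x w + dist y z) + 2 * δ

namespace IsGromovHyperbolic

variable {α : Type*} [PseudoMetricSpace α] {δ : ℝ}

theorem dist_add_dist_le (hα : IsGromovHyperbolic α δ) {x y z w : α}
    (h : dist x w + dist y z + 2 * δ < dist x y + dist z w) :
    dist x y + dist z w ≤ dist x z + dist y w + 2 * δ := by
  rcases le_max_iff.mp (sub_le_iff_le_add.mpr (hα x y z w)) with h' | h' <;> linarith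

theorem nonneg (hα : IsGromovHyperbolic α δ) (x : α) : 0 ≤ δ := by
  simpa using hα x x x x

theorem add_le_dist_iterate_succ (hα : IsGromovHyperbolic α δ) {f : α → α} (hf : Isometry f)
    {x : α} {c : ℝ} (hc : 0 < c) (hx : dist x (f x) + 2 * δ + c ≤ dist x (f (f x))) (n : ℕ) :
    dist x (f^[n] x) + c ≤ dist x (f^[n + 1] x) := by
  have hδ := hα.nonneg x
  induction n with
  | zero =>
    have := dist_triangle x (f x) (f (f x))
    simp only [Function.iterate_zero, id_eq, dist_self, Function.iterate_one, zero_add]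
    linarith [hf.dist_eq x (f x)]
  | succ n ih =>
    rw [Function.iterate_succ_apply' f (n + 1)]
    have h₁ : dist (f x) (f (f^[n + 1] x)) = dist x (f^[n + 1] x) := hf.dist_eq _ _
    have h₂ : dist (f (f x)) (f (f^[n + 1] x)) = dist x (f^[n] x) := by
      rw [hf.dist_eq, Function.iterate_succ_apply', hf.dist_eq]
    have h₃ : dist (f (f x)) (f x) = dist x (f x) := by rw [hf.dist_eq, dist_comm]
    have := hα.dist_add_dist_le (x := x) (y := f (f x)) (z := f (f^[n + 1] x)) (w := f x)
      (by linarith [dist_comm (f x) (f (f^[n + 1] x))])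
    linarith [dist_comm (f x) (f (f^[n + 1] x))]

theorem nat_mul_le_dist_iterate (hα : IsGromovHyperbolic α δ) {f : α → α} (hf : Isometry f)
    {x : α} {c : ℝ} (hc : 0 < c) (hx : dist x (f x) + 2 * δ + c ≤ dist x (f (f x))) (n : ℕ) :
    n * c ≤ dist x (f^[n] x) := by
  induction n with
  | zero => simp
  | succ n ih =>
    push_cast
    linarith [hα.add_le_dist_iterate_succ hf hc hx n]

theorem dist_le_abs_sub_add (hα : IsGromovHyperbolic α δ) {p q x y : α} {ε : ℝ}
    (hx : dist p x + dist x q ≤ dist p q + ε) (hy : dist p y + dist y q ≤ dist p q + ε) :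
    dist x y ≤ |dist p x - dist p y| + ε + 2 * δ := by
  have h_le := le_abs_self (dist p x - dist p y)
  have h_neg_le := neg_abs_le (dist p x - dist p y)
  have h := hα x y p q
  rw [dist_comm x p, dist_comm y p] at h
  rcases le_max_iff.mp (sub_le_iff_le_add.mpr h) with h | h <;> linarith

theorem abs_sub_sub_sub_le (hα : IsGromovHyperbolic α δ) {p p' x y : α}
    (hxy : dist p p' + dist x y + 2 * δ < dist p x + dist p' y)
    (hyx : dist p p' + dist x y + 2 * δ < dist p y + dist p' x) :
    |(dist p x - dist p y) - (dist p' x - dist p' y)| ≤ 2 * δ := by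
  have h₁ := hα.dist_add_dist_le (x := p) (y := x) (z := y) (w := p')
    (by linarith [dist_comm p' y])
  have h₂ := hα.dist_add_dist_le (x := p) (y := y) (z := x) (w := p')
    (by linarith [dist_comm p' x, dist_comm x y])
  rw [abs_le]
  constructor <;> linarith [dist_comm p' x, dist_comm p' y]

section AlmostFixedEndpoints

variable {f : α → α} {p q m : α} {A : ℝ}

theorem dist_map_le (hα : IsGromovHyperbolic α δ) (hf : Isometry f)
    (hp : dist p (f p) ≤ A) (hq : dist q (f q) ≤ A) (hm : dist p m + dist m q = dist p q) :
    dist m (f m) ≤ A + 2 * δ := by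
  have h := hα m (f m) p q
  have h_p : dist (f m) p ≤ dist p m + A := by
    linarith [dist_triangle (f m) (f p) p, hf.dist_eq m p, dist_comm m p, dist_comm p (f p)]
  have h_q : dist (f m) q ≤ dist m q + A := by
    linarith [dist_triangle (f m) (f q) q, hf.dist_eq m q, dist_comm q (f q)]
  rcases le_max_iff.mp (sub_le_iff_le_add.mpr h) with h | h <;> linarith [dist_comm m p]

theorem dist_map_add_dist_map_le (hα : IsGromovHyperbolic α δ) (hf : Isometry f)
    (hp : dist p (f p) ≤ A) (hq : dist q (f q) ≤ A) (hm : dist p m + dist m q = dist p q)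
    (hpm : 2 * A + 2 * δ < dist p m) (hmq : 2 * A + 2 * δ < dist m q) :
    dist p (f m) + dist (f m) q ≤ dist p q + 4 * δ := by
  have hδ := hα.nonneg p
  have hA : 0 ≤ A := dist_nonneg.trans hp
  have map_p_m : dist (f m) (f p) = dist p m := by rw [hf.dist_eq, dist_comm]
  have map_m_q : dist (f m) (f q) = dist m q := hf.dist_eq m q
  have map_p_q : dist (f p) (f q) = dist p q := hf.dist_eq p q
  have p_fm : dist p m - A ≤ dist p (f m) := by
    linarith [dist_triangle (f m) p (f p), dist_comm p (f m)]
  have q_fp : dist p q - A ≤ dist q (f p) := by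
    linarith [dist_triangle p (f p) q, dist_comm q (f p)]
  have q_fm_le : dist q (f m) ≤ dist m q + A := by
    linarith [dist_triangle q (f q) (f m), dist_comm (f q) (f m)]
  have le_q_fm : dist m q - A ≤ dist q (f m) := by
    linarith [dist_triangle (f m) q (f q), dist_comm q (f m)]
  have h₁ := hα.dist_add_dist_le (x := p) (y := f m) (z := q) (w := f p)
    (by linarith [dist_comm q (f m)])
  have h₂ := hα.dist_add_dist_le (x := q) (y := f m) (z := f p) (w := f q) (by linarith)
  linarith [dist_comm q (f m)]

theorem two_mul_dist_map_le (hα : IsGromovHyperbolic α δ) (hf : Isometry f)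
    (hp : dist p (f p) ≤ A) (hq : dist q (f q) ≤ A) (hm : dist p m + dist m q = dist p q)
    (hpm : 2 * A + 2 * δ < dist p m) (hmq : 2 * A + 2 * δ < dist m q) :
    2 * dist m (f m) ≤ dist m (f (f m)) + 14 * δ := by
  have hδ := hα.nonneg p
  have near : dist m (f m) ≤ A + 2 * δ := hα.dist_map_le hf hp hq hm
  have position : dist m (f m) ≤ |dist p m - dist p (f m)| + 4 * δ + 2 * δ :=
    hα.dist_le_abs_sub_add (by linarith) (hα.dist_map_add_dist_map_le hf hp hq hm hpm hmq)
  have map_p_m : dist (f p) (f m) = dist p m := hf.dist_eq p m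
  have map_p_fm : dist (f p) (f (f m)) = dist p (f m) := hf.dist_eq p (f m)
  have map_m_fm : dist (f (f m)) (f m) = dist m (f m) := by rw [hf.dist_eq, dist_comm]
  have p_fm : dist p m - A ≤ dist p (f m) := by
    linarith [dist_triangle (f p) p (f m), dist_comm p (f p)]
  have p_ffm : dist p (f m) - A ≤ dist p (f (f m)) := by
    linarith [dist_triangle (f p) p (f (f m)), dist_comm p (f p)]
  have shift := hα.abs_sub_sub_sub_le (p := p) (p' := f p) (x := f (f m)) (y := f m)
    (by linarith) (by linarith)
  rw [map_p_m, map_p_fm] at shift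
  calc 2 * dist m (f m)
      ≤ 2 * |dist p m - dist p (f m)| + 12 * δ := by linarith
    _ = |2 * (dist p m - dist p (f m))| + 12 * δ := by rw [abs_mul, abs_two]
    _ = |(dist p (f (f m)) - dist p (f m) - (dist p (f m) - dist p m)) -
          (dist p (f (f m)) - dist p m)| + 12 * δ := by ring_nf
    _ ≤ 2 * δ + |dist p (f (f m)) - dist p m| + 12 * δ := by
      gcongr
      exact (abs_sub _ _).trans (by gcongr)
    _ ≤ 2 * δ + dist m (f (f m)) + 12 * δ := by
      gcongr
      rw [dist_comm p, dist_comm p, dist_comm m (f (f m))]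
      exact abs_dist_sub_le (f (f m)) m p
    _ = dist m (f (f m)) + 14 * δ := by ring

end AlmostFixedEndpoints

end IsGromovHyperbolic

section Undistorted

variable {G : Type u} [Group G] {X X' Y : Set G} {H C : Subgroup G}

/-- The subgroup `H` is undistorted: on `H`, word length with respect to `Y` is at most linear in
word length with respect to `X`. Typically `Y` generates `H`, but this is not required. -/
def IsUndistorted (X Y : Set G) (H : Subgroup G) : Prop :=
  ∃ K : ℕ, ∀ h ∈ H, wordLength Y h ≤ K * wordLength X h + K

theorem IsUndistorted.trans (hYX' : IsUndistorted X' Y H) (hX'X : IsUndistorted X X' H) :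
    IsUndistorted X Y H := by
  obtain ⟨K, hK⟩ := hYX'
  obtain ⟨L, hL⟩ := hX'X
  refine ⟨K * L + K, fun h hh => ?_⟩
  calc wordLength Y h ≤ K * wordLength X' h + K := hK h hh
    _ ≤ K * (L * wordLength X h + L) + K := by gcongr; exact hL h hh
    _ ≤ (K * L + K) * wordLength X h + (K * L + K) := by linarith [Nat.zero_le (K * wordLength X h)]

theorem IsSymmGen.isUndistorted (hX : IsSymmGen X) (hYinv : ∀ y ∈ Y, y⁻¹ ∈ Y)
    (hYgen : Subgroup.closure Y = ⊤) : IsUndistorted X Y H := by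
  obtain ⟨K, hK⟩ := (hX.1.image (wordLength Y)).bddAbove
  have mem_closure (g : G) : g ∈ Subgroup.closure Y := hYgen ▸ Subgroup.mem_top g
  have wordLength_prod (l : List G) (hl : IsWordOver X l) :
      wordLength Y l.prod ≤ K * l.length := by
    induction l with
    | nil => simp [wordLength_one]
    | cons a l ih =>
      obtain ⟨ha, hl⟩ := List.forall_mem_cons.mp hl
      calc wordLength Y (a :: l).prod
          ≤ wordLength Y a + wordLength Y l.prod :=
            List.prod_cons (a := a) (l := l) ▸
              _root_.wordLength_mul_le hYinv (mem_closure a) (mem_closure l.prod)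
        _ ≤ K + K * l.length := add_le_add (hK ⟨a, ha, rfl⟩) (ih hl)
        _ = K * (a :: l).length := by rw [List.length_cons]; ring
  refine ⟨K, fun h _ => ?_⟩
  obtain ⟨l, hl, rfl⟩ := exists_isGeodesicWord_prod_eq hX.2.1 (hX.mem_closure h)
  rw [← hl.2]
  exact (wordLength_prod l hl.1).trans (Nat.le_add_right _ _)

theorem IsUndistorted.of_isFiniteRelIndex (hX : IsSymmGen X) (hYinv : ∀ y ∈ Y, y⁻¹ ∈ Y)
    (hC : C ≤ Subgroup.closure Y) [H.IsFiniteRelIndex C] (hH : IsUndistorted X Y H) :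
    IsUndistorted X Y C := by
  obtain ⟨K, hK⟩ := hH
  let rep (q : C ⧸ H.subgroupOf C) : C := q.out
  obtain ⟨A, hA⟩ := (Set.finite_range fun q => wordLength Y (rep q : G)).bddAbove
  obtain ⟨B, hB⟩ := (Set.finite_range fun q => wordLength X (rep q : G)).bddAbove
  refine ⟨A + K * B + K, fun c hc => ?_⟩
  obtain ⟨t, htC, htA, htB, htH⟩ : ∃ t ∈ C, wordLength Y t ≤ A ∧ wordLength X t ≤ B ∧
      t⁻¹ * c ∈ H := by
    let q : C ⧸ H.subgroupOf C := ((⟨c, hc⟩ : C) : C ⧸ H.subgroupOf C)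
    exact ⟨rep q, (rep q).2, hA ⟨q, rfl⟩, hB ⟨q, rfl⟩,
      Subgroup.mem_subgroupOf.mp (QuotientGroup.eq.mp (Quotient.out_eq' q))⟩
  have hX_le : wordLength X (t⁻¹ * c) ≤ B + wordLength X c := by
    have := hX.wordLength_mul_le t⁻¹ c
    rw [wordLength_inv hX.2.1] at this
    omega
  calc wordLength Y c
      ≤ wordLength Y t + wordLength Y (t⁻¹ * c) := by
        simpa using wordLength_mul_le hYinv (hC htC) (hC (mul_mem (inv_mem htC) hc))
    _ ≤ A + (K * (B + wordLength X c) + K) :=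
        add_le_add htA ((hK _ htH).trans (by gcongr))
    _ ≤ (A + K * B + K) * wordLength X c + (A + K * B + K) := by
        linarith [Nat.zero_le ((A + K * B) * wordLength X c)]

theorem isUndistorted_zpowers_of_le_wordDist (hX : IsSymmGen X) (hYinv : ∀ y ∈ Y, y⁻¹ ∈ Y)
    {h t : G} (hY : h ∈ Subgroup.closure Y) (ht : ∀ n : ℕ, n ≤ wordDist X t (h ^ n * t)) :
    IsUndistorted X Y (Subgroup.zpowers h) := by
  refine ⟨wordLength Y h * (2 * wordLength X t + 1), ?_⟩
  rintro _ ⟨e, rfl⟩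
  have he : e.natAbs ≤ wordLength X (h ^ e) + 2 * wordLength X t := by
    rw [← wordLength_pow_natAbs hX.2.1]
    exact (ht _).trans (hX.wordDist_mul_self_le _ _)
  calc wordLength Y (h ^ e) ≤ e.natAbs * wordLength Y h :=
        wordLength_pow_natAbs hYinv h e ▸ wordLength_pow_le hYinv hY _
    _ ≤ (wordLength X (h ^ e) + 2 * wordLength X t) * wordLength Y h := by gcongr
    _ ≤ _ := by
        linarith [Nat.zero_le (wordLength Y h * (2 * wordLength X t * wordLength X (h ^ e) + 1))]

end Undistorted

section Hyperbolic

variable {G : Type u} [Group G] {X Y : Set G} {δ : ℝ} {g : G}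

theorem exists_conj_pow_notMem {B : Set G} (hB : B.Finite) (hg : ¬ IsOfFinOrder g) :
    ∃ M : ℕ, ∀ t : G, ∃ i ∈ Set.Icc 1 M, t⁻¹ * g ^ i * t ∉ B := by
  refine ⟨B.ncard + 1, fun t => ?_⟩
  by_contra! hmem
  have hinj : Set.InjOn (fun i : ℕ => t⁻¹ * g ^ i * t) (Set.Icc 1 (B.ncard + 1)) :=
    fun i _ j _ hij => injective_pow_iff_not_isOfFinOrder.mpr hg (by simpa using hij)
  have := Set.ncard_le_ncard_of_injOn _ hmem hinj hB
  simp at this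

theorem IsSymmGen.isGromovHyperbolic (hX : IsSymmGen X)
    (hδ : ∀ x y z w : G,
      gromovProd X x z w ≥ min (gromovProd X x y w) (gromovProd X y z w) - δ) :
    @IsGromovHyperbolic G hX.pseudoMetricSpace δ := by
  intro x y z w
  change (wordDist X x y : ℝ) + wordDist X z w ≤
    max ((wordDist X x z : ℝ) + wordDist X y w) (wordDist X x w + wordDist X y z) + 2 * δ
  have h := hδ x z y w
  simp only [gromovProd, hX.wordDist_comm z y] at h
  rw [← sub_le_iff_le_add, le_max_iff]
  rcases min_le_iff.mp (sub_le_iff_le_add.mp h) with h | h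
  · left; linarith
  · right; linarith

theorem exists_add_le_wordDist_pow_mul_pow_mul (hX : IsSymmGen X)
    (hδ : @IsGromovHyperbolic G hX.pseudoMetricSpace δ) (hg : ¬ IsOfFinOrder g) :
    ∃ k : ℕ, k ≠ 0 ∧ ∃ t : G,
      (wordDist X t (g ^ k * t) : ℝ) + 2 * δ + 1 ≤ wordDist X t (g ^ k * (g ^ k * t)) := by
  let := hX.pseudoMetricSpace
  obtain ⟨R, hR⟩ := exists_nat_ge (16 * δ + 1)
  obtain ⟨M, hM⟩ := exists_conj_pow_notMem (hX.finite_wordLength_le R) hg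
  obtain ⟨S, hS⟩ := exists_nat_gt (2 * (M * wordLength X g : ℕ) + 2 * δ)
  obtain ⟨N, hN⟩ : ∃ N : ℕ, 2 * S < wordDist X 1 (g ^ N) := by
    by_contra! hN
    refine Set.infinite_range_of_injective (injective_pow_iff_not_isOfFinOrder.mpr hg)
      ((hX.finite_wordLength_le (2 * S)).subset ?_)
    rintro _ ⟨n, rfl⟩
    simpa [wordDist] using hN n
  obtain ⟨m, hm, hmN⟩ := hX.exists_wordDist_eq (g := 1) (h := g ^ N) (k := S) (by omega)
  obtain ⟨i, ⟨hi, hiM⟩, hmi⟩ := hM m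
  have hgi : wordLength X (g ^ i) ≤ M * wordLength X g :=
    (wordLength_pow_le hX.2.1 (hX.mem_closure g) i).trans (Nat.mul_le_mul_right _ hiM)
  have hp : wordDist X 1 (g ^ i * 1) ≤ M * wordLength X g := by simpa [wordDist] using hgi
  have hq : wordDist X (g ^ N) (g ^ i * g ^ N) ≤ M * wordLength X g := by
    rwa [wordDist, (Commute.pow_pow_self g i N).eq, inv_mul_cancel_left]
  have hmN' : (wordDist X 1 m : ℝ) + wordDist X m (g ^ N) = wordDist X 1 (g ^ N) := by
    rw [hm]
    exact_mod_cast hmN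
  have hdouble : 2 * (wordDist X m (g ^ i * m) : ℝ) ≤
      wordDist X m (g ^ i * (g ^ i * m)) + 14 * δ :=
    hδ.two_mul_dist_map_le (hX.isometry_mul_left (g ^ i)) (p := 1) (q := g ^ N) (m := m)
      (A := (M * wordLength X g : ℕ)) (Nat.cast_le.mpr hp) (Nat.cast_le.mpr hq)
      hmN'
      (hS.trans_le (Nat.cast_le.mpr hm.ge)) (hS.trans_le (Nat.cast_le.mpr (by omega)))
  have hlarge : (R : ℝ) < wordDist X m (g ^ i * m) := by
    simpa [wordDist, mul_assoc] using hmi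
  exact ⟨i, by omega, m, by linarith⟩

theorem exists_isUndistorted_zpowers_pow (hG : IsWordHyperbolic G) (hX : IsSymmGen X)
    (hYinv : ∀ y ∈ Y, y⁻¹ ∈ Y) (hY : g ∈ Subgroup.closure Y) :
    ∃ k : ℕ, k ≠ 0 ∧ IsUndistorted X Y (Subgroup.zpowers (g ^ k)) := by
  by_cases hg : IsOfFinOrder g
  · refine ⟨orderOf g, hg.orderOf_pos.ne', 0, ?_⟩
    simp [pow_orderOf_eq_one, wordLength_one]
  obtain ⟨X', hX', δ, -, hδ⟩ := hG
  have hδ' := hX'.isGromovHyperbolic hδ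
  obtain ⟨k, hk, t, ht⟩ := exists_add_le_wordDist_pow_mul_pow_mul hX' hδ' hg
  have hgrowth (n : ℕ) : n ≤ wordDist X' t ((g ^ k) ^ n * t) := by
    let := hX'.pseudoMetricSpace
    have := hδ'.nat_mul_le_dist_iterate (hX'.isometry_mul_left (g ^ k)) one_pos ht n
    rw [mul_one, mul_left_iterate] at this
    exact Nat.cast_le.mp this
  exact ⟨k, hk, (isUndistorted_zpowers_of_le_wordDist hX' hYinv (pow_mem hY k) hgrowth).trans
    (hX.isUndistorted hX'.2.1 hX'.2.2)⟩

open scoped IsMulCommutative in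
theorem isFiniteRelIndex_zpowers_pow (g : G) {k : ℕ} (hk : k ≠ 0) :
    (Subgroup.zpowers (g ^ k)).IsFiniteRelIndex (Subgroup.zpowers g) := by
  rw [Subgroup.isFiniteRelIndex_iff_finiteIndex]
  have : Group.FG (Subgroup.zpowers g) := (Group.fg_iff_subgroup_fg _).mpr
    ((Subgroup.fg_iff _).mpr ⟨{g}, (Subgroup.zpowers_eq_closure g).symm, Set.finite_singleton g⟩)
  have := Subgroup.finiteIndex_range_powMonoidHom_of_fg (Subgroup.zpowers g) hk
  refine Subgroup.finiteIndex_of_le (H := (powMonoidHom (α := Subgroup.zpowers g) k).range) ?_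
  rintro _ ⟨⟨_, e, rfl⟩, rfl⟩
  exact Subgroup.mem_subgroupOf.mpr ⟨e, by simp [← zpow_natCast, ← zpow_mul, mul_comm]⟩

theorem IsVirtuallyCyclic.exists_isFiniteRelIndex_zpowers {C : Subgroup G}
    (hC : IsVirtuallyCyclic C) : ∃ z ∈ C, (Subgroup.zpowers z).IsFiniteRelIndex C := by
  obtain ⟨Z, hZ, hfin⟩ := hC
  obtain ⟨z, rfl⟩ := (Subgroup.isCyclic_iff_exists_zpowers_eq_top Z).mp hZ
  refine ⟨z, z.2, (Subgroup.isFiniteRelIndex_iff_finiteIndex).mpr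
    (Subgroup.finiteIndex_of_le (H := Subgroup.zpowers z) ?_)⟩
  rw [Subgroup.zpowers_le]
  exact Subgroup.mem_subgroupOf.mpr (Subgroup.mem_zpowers _)

theorem IsVirtuallyCyclic.isUndistorted {C : Subgroup G} (hC : IsVirtuallyCyclic C)
    (hG : IsWordHyperbolic G) (hX : IsSymmGen X) (hYinv : ∀ y ∈ Y, y⁻¹ ∈ Y)
    (hCY : C ≤ Subgroup.closure Y) : IsUndistorted X Y C := by
  obtain ⟨z, hzC, hz⟩ := hC.exists_isFiniteRelIndex_zpowers
  obtain ⟨k, hk, hund⟩ := exists_isUndistorted_zpowers_pow hG hX hYinv (hCY hzC)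
  have := isFiniteRelIndex_zpowers_pow z hk
  have : (Subgroup.zpowers (z ^ k)).IsFiniteRelIndex C :=
    ⟨Subgroup.relIndex_ne_zero_trans (K := Subgroup.zpowers z) Subgroup.relIndex_ne_zero
      Subgroup.relIndex_ne_zero⟩
  exact hund.of_isFiniteRelIndex hX hYinv hCY

end Hyperbolic

section Quasigeodesic

variable {G : Type u} [Group G] {X Y : Set G} {C : Subgroup G} {U V : List G}

theorem IsGeodesicWord.isQuasigeodesicWord (hV : IsGeodesicWord Y V) (hYX : Y ⊆ X)
    (hYinv : ∀ y ∈ Y, y⁻¹ ∈ Y) (hYC : Y ⊆ C) {K : ℕ}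
    (hK : ∀ c ∈ C, wordLength Y c ≤ K * wordLength X c + K) : IsQuasigeodesicWord X K V := by
  refine ⟨fun x hx => hYX (hV.1 x hx), fun v hv => ?_⟩
  obtain ⟨hvY, hvlen⟩ := hV.infix hYinv hv
  rw [hvlen]
  exact_mod_cast hK v.prod (list_prod_mem fun x hx => hYC (hvY x hx))

theorem ShortestIn.length_suffix_le (hX : IsSymmGen X) (hU : IsGeodesicWord X U)
    (hmin : ShortestIn X U.prod {x | ∃ c ∈ C, x = U.prod * c}) {A : List G} (hA : A <:+ U)
    {c : G} (hc : c ∈ C) : A.length ≤ wordLength X (A.prod * c) := by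
  obtain ⟨W, rfl⟩ := hA
  have hle := hmin.2 _ ⟨c, hc, rfl⟩
  rw [← hU.2, List.prod_append, mul_assoc, List.length_append] at hle
  have hmul := hX.wordLength_mul_le W.prod (A.prod * c)
  have hW := wordLength_prod_le (List.forall_mem_append.mp hU.1).1
  omega

theorem isQuasigeodesicWord_append (hX : IsSymmGen X) (hU : IsGeodesicWord X U)
    (hmin : ShortestIn X U.prod {x | ∃ c ∈ C, x = U.prod * c}) {K : ℝ}
    (hV : IsQuasigeodesicWord X K V) (hVC : ∀ x ∈ V, x ∈ C) :
    IsQuasigeodesicWord X (2 * K + 1) (U ++ V) := by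
  have hK : 0 ≤ K := by simpa [wordLength_one] using hV.2 [] (List.nil_infix)
  refine ⟨List.forall_mem_append.mpr ⟨hU.1, hV.1⟩, fun v hv => ?_⟩
  rcases List.infix_append_iff.mp hv with hv | hv | ⟨A, B, rfl, hA, hB⟩
  · rw [(hU.infix hX.2.1 hv).2]
    nlinarith [Nat.cast_nonneg (α := ℝ) (wordLength X v.prod)]
  · nlinarith [hV.2 v hv, Nat.cast_nonneg (α := ℝ) (wordLength X v.prod)]
  · have hBC : B.prod ∈ C := list_prod_mem fun x hx => hVC x (hB.subset hx)
    have hA_le : A.length ≤ wordLength X (A.prod * B.prod) := hmin.length_suffix_le hX hU hA hBC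
    have hB_le : wordLength X B.prod ≤ 2 * wordLength X (A.prod * B.prod) := by
      have := hX.wordLength_mul_le A.prod⁻¹ (A.prod * B.prod)
      rw [inv_mul_cancel_left, wordLength_inv hX.2.1, ← (hU.infix hX.2.1 hA.isInfix).2] at this
      omega
    rw [List.length_append, List.prod_append, Nat.cast_add]
    calc (A.length : ℝ) + B.length
        ≤ wordLength X (A.prod * B.prod) + (K * wordLength X B.prod + K) :=
          add_le_add (Nat.cast_le.mpr hA_le) (hV.2 B hB.isInfix)
      _ ≤ wordLength X (A.prod * B.prod) + (K * (2 * wordLength X (A.prod * B.prod)) + K) := by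
          gcongr
          exact_mod_cast hB_le
      _ ≤ (2 * K + 1) * wordLength X (A.prod * B.prod) + (2 * K + 1) := by linarith

end Quasigeodesic

/-- **Lemma 2.2(1).** A geodesic ending at a shortest coset representative followed by a
geodesic in the virtually cyclic subgroup is quasigeodesic. -/
theorem coset_geodesic_concat_quasigeodesic {G : Type u} [Group G]
    (hG : IsWordHyperbolic G) (X : Set G) (hX : IsSymmGen X)
    (C₁ : Subgroup G) (hvc : IsVirtuallyCyclic ↥C₁)
    (Y : Set G) (hYX : Y ⊆ X) (hYC : Y ⊆ (C₁ : Set G))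
    (hYinv : ∀ y ∈ Y, y⁻¹ ∈ Y) (hYgen : Subgroup.closure Y = C₁) :
    ∃ lam : ℝ, 0 < lam ∧
      ∀ U V : List G,
        IsGeodesicWord X U →
        ShortestIn X U.prod {x | ∃ c ∈ C₁, x = U.prod * c} →
        IsGeodesicWord Y V →
        IsQuasigeodesicWord X lam (U ++ V) := by
  obtain ⟨K, hK⟩ := hvc.isUndistorted hG hX hYinv hYgen.ge
  refine ⟨2 * K + 1, by positivity, fun U V hU hmin hV => ?_⟩
  exact isQuasigeodesicWord_append hX hU hmin (hV.isQuasigeodesicWord hYX hYinv hYC hK)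
    fun x hx => hYC (hV.1 x hx)
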